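/- Let A be a unital C*-algebra and φ a faithful tracial state on A. Let x, y ∈ A, let u ∈ A be any unitary such that {u} and {x, y} are *-free, and assume that there exists a Haar unitary v ∈ A such that {v}, {u} and {x, y} are *-free. If the pair (x, y) satisfies condition (3.6), then the pairs (x, y) and (ux, uy) have the same bi-*-distribution. -/

import Mathlib

section
variable {A : Type*} [Ring A] [Algebra ℂ A] [StarRing A] [StarModule ℂ A]

/-- The alternating product `x^{ω(1)} ⋯ x^{ω(k₁)} y^{ω(k₁+1)} ⋯ y^{ω(m)}`:
the first `k₁` letters are from `{x, x*}`, the remaining ones from `{y, y*}`,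
with star-parities given by `ω` (`true` = starred). -/
def altProd (x y : A) (m k₁ : ℕ) (ω : Fin m → Bool) : A :=
  (List.ofFn (fun t : Fin m =>
    if t.val < k₁ then (if ω t then star x else x)
    else (if ω t then star y else y))).prod

/-- The factor of the sets `P_{i,j}(x,y)`: for odd length the alternating product itself,
for even length the centered alternating product `z - φ(z)·1`. -/
noncomputable def facElt (φ : A → ℂ) (x y : A) (m k₁ : ℕ) (ω : Fin m → Bool) : A :=
  if Odd m then altProd x y m k₁ ω
  else altProd x y m k₁ ω - φ (altProd x y m k₁ ω) • (1 : A)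

/-- Condition (3.6): the expectations of the admissible products
`p_{i₁,i₂} p_{i₂,i₃} ⋯ p_{i_{n-1},i_n}` of factors from the sets `P_{i,j}(x,y)` vanish.
Factor `i` is an alternating word of length `len i ≥ 1` with `kk i` letters from
`{x, x*}` followed by `len i - kk i` letters from `{y, y*}`; the chain condition links the
second index of each factor with the first index of the next one; and the factors are
ordered so that either (i) the `x`-only factors precede the `y`-only factors, or (ii)
exactly one factor mixes letters of both types, with `x`-only factors before it and
`y`-only factors after it. -/
noncomputable def Condition36 (φ : A → ℂ) (x y : A) : Prop :=
  ∀ N : ℕ, 1 ≤ N → ∀ len kk : Fin N → ℕ, ∀ ω : (i : Fin N) → Fin (len i) → Bool,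
    (∀ i, 1 ≤ len i) →
    (∀ i, kk i ≤ len i) →
    (∀ i, (List.ofFn (ω i)).Chain' (· ≠ ·)) →
    (∀ i : Fin N, ∀ h : i.val + 1 < N,
      (List.ofFn (ω ⟨i.val + 1, h⟩)).headD false =
        (if Odd (len i) then (List.ofFn (ω i)).headD false
          else !(List.ofFn (ω i)).headD false)) →
    ((∃ m : ℕ, m ≤ N ∧ (∀ i : Fin N, i.val < m → kk i = len i) ∧
        (∀ i : Fin N, m ≤ i.val → kk i = 0)) ∨
     (∃ m : Fin N, (∀ i : Fin N, i.val < m.val → kk i = len i) ∧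
        0 < kk m ∧ kk m < len m ∧ (∀ i : Fin N, m.val < i.val → kk i = 0))) →
    φ (List.ofFn (fun i => facElt φ x y (len i) (kk i) (ω i))).prod = 0

/-- The pairs `(x, y)` and `(x', y')` have the same bi-`*`-distribution. -/
def SameBiDist (φ : A → ℂ) (x y x' y' : A) : Prop :=
  ∀ n : ℕ, 1 ≤ n → ∀ k : ℕ, k ≤ n → ∀ ω : Fin n → Bool,
    φ (altProd x y n k ω) = φ (altProd x' y' n k ω)

/-- A Haar unitary. -/
def IsHaarUnitary (φ : A → ℂ) (u : A) : Prop :=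
  u * star u = 1 ∧ star u * u = 1 ∧
  ∀ n : ℕ, 1 ≤ n → φ (u ^ n) = 0 ∧ φ ((star u) ^ n) = 0

/-- `*`-freeness of a family of subsets: alternating products of centered elements of the
generated unital `*`-subalgebras have zero expectation. -/
def FreeFamily (φ : A → ℂ) {ι : Type*} (S : ι → Set A) : Prop :=
  ∀ m : ℕ, 1 ≤ m → ∀ idx : Fin m → ι,
    (∀ i : Fin m, ∀ h : i.val + 1 < m, idx i ≠ idx ⟨i.val + 1, h⟩) →
    ∀ a : Fin m → A,
      (∀ i, a i ∈ StarAlgebra.adjoin ℂ (S (idx i)) ∧ φ (a i) = 0) →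
      φ (List.ofFn a).prod = 0

end

section Helpers

variable {A : Type*} [Ring A] [Algebra ℂ A] [StarRing A] [StarModule ℂ A]

/-- A letter: `b` chooses `y` over `x`, `s` chooses the adjoint. -/
def ltr (x y : A) (b s : Bool) : A :=
  if b then (if s then star y else y) else (if s then star x else x)

/-- Evaluation of a word. -/
def evW (x y : A) (W : List (Bool × Bool)) : A := (W.map fun p => ltr x y p.1 p.2).prod

/-- The alternating word starting with star-parity `s`. -/
def wd : Bool → List Bool → List (Bool × Bool)
  | _, [] => []
  | s, b :: c => (b, s) :: wd (!s) c

/-- Star-parity with which the next block must start. -/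
def nx : Bool → List Bool → Bool
  | s, [] => !s
  | s, _ :: c => nx (!s) c

/-- Concatenation of a chain of blocks. -/
def fl : Bool → List (List Bool) → List (Bool × Bool)
  | _, [] => []
  | s, c :: L => wd s c ++ fl (nx s c) L

/-- Centered block. -/
noncomputable def fac (φ : A →ₗ[ℂ] ℂ) (x y : A) (s : Bool) (c : List Bool) : A :=
  if Odd c.length then evW x y (wd s c) else evW x y (wd s c) - φ (evW x y (wd s c)) • (1 : A)

/-- Product of a chain of centered blocks. -/
noncomputable def chainG (φ : A →ₗ[ℂ] ℂ) (x y : A) : Bool → List (List Bool) → A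
  | _, [] => 1
  | s, c :: L => fac φ x y s c * chainG φ x y (nx s c) L

/-- List version of condition (3.6). -/
def Cond36L (φ : A →ₗ[ℂ] ℂ) (x y : A) : Prop :=
  ∀ s L, L ≠ [] → (∀ c ∈ L, c ≠ []) → L.flatten.Pairwise (· ≤ ·) → φ (chainG φ x y s L) = 0

/-- Start parity of the `i`-th block. -/
def st : Bool → List (List Bool) → ℕ → Bool
  | s, [], _ => s
  | s, _ :: _, 0 => s
  | s, c :: L, i + 1 => st (nx s c) L i

theorem evW_append (x y : A) (V W : List (Bool × Bool)) :
    evW x y (V ++ W) = evW x y V * evW x y W := by simp [evW]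

theorem evW_cons (x y : A) (p : Bool × Bool) (W : List (Bool × Bool)) :
    evW x y (p :: W) = ltr x y p.1 p.2 * evW x y W := by simp [evW]

theorem wd_length (s : Bool) (c : List Bool) : (wd s c).length = c.length := by
  induction c generalizing s with
  | nil => rfl
  | cons b c ih => simp [wd, ih]

theorem wd_fst (s : Bool) (c : List Bool) : (wd s c).map Prod.fst = c := by
  induction c generalizing s with
  | nil => rfl
  | cons b c ih => simp [wd, ih]

theorem fl_fst (s : Bool) (L : List (List Bool)) : (fl s L).map Prod.fst = L.flatten := by
  induction L generalizing s with
  | nil => rfl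
  | cons b c ih => simp [fl, ih, wd_fst]

theorem nx_eq (s : Bool) (c : List Bool) : nx s c = if Odd c.length then s else !s := by
  induction c generalizing s with
  | nil => simp [nx]
  | cons b c ih =>
    by_cases h : Odd c.length
    · simp [nx, ih, h, Nat.odd_add_one]
    · simp [nx, ih, h, Nat.odd_add_one]

theorem exists_fl (W : List (Bool × Bool)) (hW : W ≠ []) :
    ∃ s L, (∀ c ∈ L, c ≠ []) ∧ L ≠ [] ∧ fl s L = W := by
  induction W with
  | nil => exact absurd rfl hW
  | cons p W ih =>
    obtain ⟨b, s⟩ := p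
    by_cases hW' : W = []
    · exact ⟨s, [[b]], by simp, by simp, by simp [fl, wd, hW']⟩
    · obtain ⟨s', L, h1, h2, h3⟩ := ih hW'
      cases L with
      | nil => exact absurd rfl h2
      | cons c L =>
        by_cases hs : s' = !s
        · refine ⟨s, (b :: c) :: L, ?_, by simp, ?_⟩
          · intro d hd
            rcases List.mem_cons.1 hd with rfl | hd
            · simp
            · exact h1 d (List.mem_cons_of_mem _ hd)
          · rw [← h3, hs]; simp [fl, wd, nx]
        · have hs' : s' = s := by cases s <;> cases s' <;> simp_all
          refine ⟨s, [b] :: c :: L, ?_, by simp, ?_⟩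
          · intro d hd
            rcases List.mem_cons.1 hd with rfl | hd
            · simp
            · exact h1 d hd
          · rw [← h3, hs']; simp [fl, wd, nx]

theorem agree_smaller (φ : A →ₗ[ℂ] ℂ) (x y x' y' : A)
    (hev : ∀ s c, ¬ Odd (List.length c) → φ (evW x' y' (wd s c)) = φ (evW x y (wd s c)))
    (n : ℕ)
    (ih : ∀ W : List (Bool × Bool), W.length < n → (W.map Prod.fst).Pairwise (· ≤ ·) →
      φ (evW x y W) = φ (evW x' y' W)) (L : List (List Bool)) :
    ∀ (s : Bool) (V : List (Bool × Bool)), V.length + L.flatten.length < n →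
      (V.map Prod.fst ++ L.flatten).Pairwise (· ≤ ·) →
      φ (evW x y V * chainG φ x y s L) = φ (evW x' y' V * chainG φ x' y' s L) := by
  induction L with
  | nil =>
    intro s V h1 h2
    simpa [chainG] using ih V (by simpa using h1) (by simpa using h2)
  | cons c L IH =>
    intro s V h1 h2
    have hA : φ (evW x y (V ++ wd s c) * chainG φ x y (nx s c) L)
        = φ (evW x' y' (V ++ wd s c) * chainG φ x' y' (nx s c) L) := by
      apply IH
      · simp [wd_length] at h1 ⊢; omega
      · simpa [wd_fst] using h2
    by_cases ho : Odd c.length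
    · simpa [chainG, fac, ho, evW_append, mul_assoc] using hA
    · have hB : φ (evW x y V * chainG φ x y (nx s c) L)
          = φ (evW x' y' V * chainG φ x' y' (nx s c) L) := by
        apply IH
        · simp at h1; simp; omega
        · refine h2.sublist ?_
          simp
      simp only [evW_append, mul_assoc] at hA
      simp only [chainG, fac, ho, if_false, sub_mul, mul_sub, smul_mul_assoc, mul_smul_comm,
        one_mul, map_sub, map_smul, hA, hB, hev s c ho]

theorem agree_step (φ : A →ₗ[ℂ] ℂ) (x y x' y' : A)
    (hev : ∀ s c, ¬ Odd (List.length c) → φ (evW x' y' (wd s c)) = φ (evW x y (wd s c)))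
    (n : ℕ)
    (ih : ∀ W : List (Bool × Bool), W.length < n → (W.map Prod.fst).Pairwise (· ≤ ·) →
      φ (evW x y W) = φ (evW x' y' W)) (L : List (List Bool)) (hL : ∀ c ∈ L, c ≠ []) :
    ∀ (s : Bool) (V : List (Bool × Bool)), V.length + L.flatten.length ≤ n →
      (V.map Prod.fst ++ L.flatten).Pairwise (· ≤ ·) →
      φ (evW x y V * chainG φ x y s L) = φ (evW x' y' V * chainG φ x' y' s L) →
      φ (evW x y (V ++ fl s L)) = φ (evW x' y' (V ++ fl s L)) := by
  induction L with
  | nil =>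
    intro s V h1 h2 h3
    simpa [chainG, fl] using h3
  | cons c L IH =>
    intro s V h1 h2 h3
    have hc : 0 < c.length := List.length_pos_iff.2 (hL c (by simp))
    have key := IH (fun d hd => hL d (List.mem_cons_of_mem _ hd)) (nx s c) (V ++ wd s c)
      (by simp [wd_length] at h1 ⊢; omega) (by simpa [wd_fst] using h2)
    simp only [fl]
    rw [← List.append_assoc]
    apply key
    by_cases ho : Odd c.length
    · simpa [chainG, fac, ho, evW_append, mul_assoc] using h3
    · have hB : φ (evW x y V * chainG φ x y (nx s c) L)
          = φ (evW x' y' V * chainG φ x' y' (nx s c) L) := by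
        apply agree_smaller φ x y x' y' hev n ih
        · simp at h1; simp; omega
        · refine h2.sublist ?_
          simp
      simp only [chainG, fac, ho, if_false, sub_mul, mul_sub, smul_mul_assoc, mul_smul_comm,
        one_mul, map_sub, map_smul, hB, hev s c ho] at h3
      simp only [evW_append, mul_assoc]
      exact sub_left_injective h3

theorem agree_all (φ : A →ₗ[ℂ] ℂ) (x y x' y' : A)
    (hev : ∀ s c, ¬ Odd (List.length c) → φ (evW x' y' (wd s c)) = φ (evW x y (wd s c)))
    (h : Cond36L φ x y) (h' : Cond36L φ x' y') (n : ℕ) :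
    ∀ W : List (Bool × Bool), W.length = n → (W.map Prod.fst).Pairwise (· ≤ ·) →
      φ (evW x y W) = φ (evW x' y' W) := by
  induction n using Nat.strong_induction_on with
  | _ n ih =>
    intro W hW hs
    by_cases h0 : W = []
    · simp [h0, evW]
    · obtain ⟨s, L, h1, h2, h3⟩ := exists_fl W h0
      have hfl : L.flatten = W.map Prod.fst := by rw [← h3, fl_fst]
      have := agree_step φ x y x' y' hev n (fun W' hW' => ih _ hW' W' rfl) L h1 s []
        (by simp only [hfl]; simp [hW]) (by simpa [hfl] using hs)
        (by
          have e1 := h s L h2 h1 (by rw [hfl]; exact hs)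
          have e2 := h' s L h2 h1 (by rw [hfl]; exact hs)
          simp [evW, e1, e2])
      simpa [h3] using this

/-! ### From `Condition36` to the list version -/

theorem odd_succ_dec (t : ℕ) : decide (Odd (t + 1)) = !decide (Odd t) := by
  rw [← decide_not]
  exact decide_eq_decide.2 Nat.odd_add_one

theorem ev_ofFn (x y : A) (s : Bool) (c : List Bool) :
    evW x y (wd s c) = (List.ofFn (fun t : Fin c.length =>
      ltr x y (c)[t.val] (s ^^ decide (Odd t.val)))).prod := by
  induction c generalizing s with
  | nil => simp [evW, wd]
  | cons b c ih =>
    simp only [wd, evW_cons, ih, List.length_cons, List.ofFn_succ, List.prod_cons]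
    congr 1
    · simp
    · congr 2
      funext t
      simp only [Fin.val_succ, odd_succ_dec, List.getElem_cons_succ]
      cases s <;> simp

theorem lt_count_iff (c : List Bool) (hc : c.Pairwise (· ≤ ·)) (t : ℕ) (ht : t < c.length) :
    t < c.count false ↔ (c)[t] = false := by
  induction c generalizing t with
  | nil => simp at ht
  | cons b c ih =>
    rw [List.pairwise_cons] at hc
    cases b with
    | false =>
      cases t with
      | zero => simp
      | succ t => simpa using ih hc.2 t (by simpa using ht)
    | true =>
      have hall : ∀ a ∈ c, a = true := fun a ha => by
        have := hc.1 a ha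
        cases a with
        | true => rfl
        | false => exact absurd this (by decide)
      have h0 : (true :: c).count false = 0 := by
        rw [List.count_eq_zero]
        intro hm
        rcases List.mem_cons.1 hm with h | h
        · simp at h
        · simpa using hall _ h
      rw [h0]
      have : (true :: c)[t] = true := by
        have hm : (true :: c)[t] ∈ true :: c := List.getElem_mem ht
        rcases List.mem_cons.1 hm with h | h
        · exact h
        · exact hall _ h
      simp [this]

theorem altProd_eq (x y : A) (s : Bool) (c : List Bool) (hc : c.Pairwise (· ≤ ·)) :
    altProd x y c.length (c.count false) (fun t => s ^^ decide (Odd t.val)) = evW x y (wd s c) := by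
  rw [ev_ofFn, altProd]
  congr 2
  funext t
  have := lt_count_iff c hc t.val t.isLt
  by_cases h : (c)[t.val] = false
  · simp [ltr, h, this.2 h]
  · have h2 : ¬ (t.val < c.count false) := fun h' => h (this.1 h')
    rw [Bool.not_eq_false] at h
    rw [if_neg h2, h]
    simp [ltr]

theorem chainG_ofFn (φ : A →ₗ[ℂ] ℂ) (x y : A) (s : Bool) (L : List (List Bool)) :
    chainG φ x y s L = (List.ofFn (fun i : Fin L.length =>
      fac φ x y (st s L i.val) L[i.val])).prod := by
  induction L generalizing s with
  | nil => simp [chainG]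
  | cons c L ih => simp [chainG, ih, List.ofFn_succ, st]

theorem st_succ (s : Bool) (L : List (List Bool)) (i : ℕ) (h : i + 1 < L.length) :
    st s L (i + 1) = nx (st s L i) (L[i]'(by omega)) := by
  induction L generalizing s i with
  | nil => simp at h
  | cons c L ih =>
    cases i with
    | zero =>
      cases L with
      | nil => simp at h
      | cons d L => simp [st]
    | succ i => simpa [st] using ih (nx s c) i (by simpa using h)

theorem headD_ofFn (s : Bool) (n : ℕ) (hn : 1 ≤ n) :
    (List.ofFn (fun t : Fin n => s ^^ decide (Odd t.val))).headD false = s := by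
  obtain ⟨n, rfl⟩ : ∃ m, n = m + 1 := ⟨n - 1, by omega⟩
  simp [List.ofFn_succ]

theorem cond36L_of (φ : A →ₗ[ℂ] ℂ) (x y : A) (h : Condition36 (fun z => φ z) x y) :
    Cond36L φ x y := by
  intro s L hL hne hs
  rw [List.pairwise_flatten] at hs
  obtain ⟨hs1, hs2⟩ := hs
  have hcross : ∀ i j (hi : i < L.length) (hj : j < L.length), i < j →
      ∀ a ∈ L[i], ∀ b ∈ L[j], a ≤ b := by
    intro i j hi hj hij
    exact List.pairwise_iff_getElem.1 hs2 i j hi hj hij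
  have hpos : ∀ i : Fin L.length, 1 ≤ (L[i.val]).length := fun i =>
    List.length_pos_iff.2 (hne _ (List.getElem_mem _))
  have key := h L.length (List.length_pos_iff.2 hL) (fun i => (L[i.val]).length)
    (fun i => (L[i.val]).count false) (fun i t => st s L i.val ^^ decide (Odd t.val))
    hpos (fun i => List.count_le_length) ?_ ?_ ?_
  · rw [chainG_ofFn]
    convert key using 3
    congr 1
    funext i
    simp only [facElt, fac]
    rw [altProd_eq x y _ _ (hs1 _ (List.getElem_mem _))]
  · intro i
    show List.IsChain _ _
    rw [List.isChain_iff_getElem]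
    intro j hj
    simp only [List.getElem_ofFn, odd_succ_dec]
    have hb : ∀ a b : Bool, (a ^^ b) ≠ (a ^^ !b) := by decide
    exact hb _ _
  · intro i hi
    rw [headD_ofFn _ _ (hpos ⟨i.val + 1, hi⟩), headD_ofFn _ _ (hpos i), st_succ s L i.val hi, nx_eq]
  · have hT : ∀ c : List Bool, false ∉ c → c.count false = 0 := fun c hc =>
      List.count_eq_zero.2 hc
    have hF : ∀ c : List Bool, true ∉ c → c.count false = c.length := by
      intro c hc
      rw [List.count_eq_length]
      intro b hb
      cases b with
      | false => rfl
      | true => exact absurd hb hc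
    by_cases hmix : ∃ m : Fin L.length, false ∈ L[m.val] ∧ true ∈ L[m.val]
    · right
      obtain ⟨m, hm1, hm2⟩ := hmix
      refine ⟨m, ?_, ?_, ?_, ?_⟩
      · intro i hi
        apply hF
        intro ht
        have := hcross i.val m.val i.isLt m.isLt hi _ ht _ hm1
        exact absurd this (by decide)
      · exact List.count_pos_iff.2 hm1
      · refine lt_of_le_of_ne List.count_le_length ?_
        intro he
        have := List.count_eq_length.1 he _ hm2
        simp at this
      · intro i hi
        apply hT
        intro ht
        have := hcross m.val i.val m.isLt i.isLt hi _ hm2 _ ht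
        exact absurd this (by decide)
    · left
      have hpure : ∀ i : Fin L.length, false ∈ L[i.val] → true ∉ L[i.val] := fun i h1 h2 =>
        hmix ⟨i, h1, h2⟩
      by_cases hex : ∃ m : ℕ, ∃ hm : m < L.length, false ∉ L[m]
      · classical
        obtain ⟨hm, hmf⟩ := Nat.find_spec hex
        refine ⟨Nat.find hex, hm.le, ?_, ?_⟩
        · intro i hi
          have := Nat.find_min hex hi
          apply hF
          apply hpure
          by_contra hcon
          exact this ⟨i.isLt, hcon⟩
        · intro i hi
          apply hT
          rcases hi.eq_or_lt with he | hlt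
          · intro hfi
            apply hmf
            simpa [he] using hfi
          · intro hfi
            obtain ⟨b, hb⟩ := List.exists_mem_of_ne_nil _ (hne _ (List.getElem_mem hm))
            have := hcross _ _ hm i.isLt hlt b hb _ hfi
            cases b with
            | false => exact hmf hb
            | true => exact absurd this (by decide)
      · push Not at hex
        refine ⟨L.length, le_rfl, fun i _ => hF _ (hpure i (hex _ i.isLt)), ?_⟩
        intro i hi
        exact absurd i.isLt (by omega)

/-! ### Multiplication by the free unitary -/

theorem free_list (φ : A →ₗ[ℂ] ℂ) (S : Bool → Set A) (hf : FreeFamily (fun z => φ z) S)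
    (l : List (Bool × A)) (hl : l ≠ []) (hch : l.IsChain (fun p q => p.1 ≠ q.1))
    (hm : ∀ p ∈ l, p.2 ∈ StarAlgebra.adjoin ℂ (S p.1) ∧ φ p.2 = 0) :
    φ ((l.map Prod.snd).prod) = 0 := by
  have := hf l.length (List.length_pos_iff.2 hl) (fun i => (l[i.val]).1) ?_
    (fun i => (l[i.val]).2) (fun i => hm _ (List.getElem_mem _))
  · convert this using 3
    apply List.ext_getElem <;> simp
  · intro i hi
    exact List.isChain_iff_getElem.1 hch i.val hi

/-- Left boundary unitary. -/
def preU (u : A) (s : Bool) : A := if s then 1 else u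

/-- Right boundary unitary. -/
def postU (u : A) (s : Bool) : A := if s then star u else 1

theorem ev_twist (x y u : A) (hu : u * star u = 1 ∧ star u * u = 1) (s : Bool) (c : List Bool) :
    evW (u * x) (u * y) (wd s c) = preU u s * evW x y (wd s c) * postU u (nx s c) := by
  induction c generalizing s with
  | nil => cases s <;> simp [wd, evW, preU, postU, nx, hu.1]
  | cons b c ih =>
    simp only [wd, evW_cons, ih, nx]
    have : ltr (u * x) (u * y) b s * preU u (!s) = preU u s * ltr x y b s := by
      cases s <;> cases b <;> simp [ltr, preU, mul_assoc, hu.2]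
    rw [← mul_assoc, ← mul_assoc, this]
    simp only [mul_assoc]

theorem ev_even (φ : A →ₗ[ℂ] ℂ) (htr : ∀ a b : A, φ (a * b) = φ (b * a))
    (x y u : A) (hu : u * star u = 1 ∧ star u * u = 1) (s : Bool) (c : List Bool)
    (hc : ¬ Odd c.length) :
    φ (evW (u * x) (u * y) (wd s c)) = φ (evW x y (wd s c)) := by
  rw [ev_twist x y u hu, nx_eq, if_neg hc, htr, ← mul_assoc]
  cases s <;> simp [preU, postU, hu.2]

theorem fac_twist (φ : A →ₗ[ℂ] ℂ) (htr : ∀ a b : A, φ (a * b) = φ (b * a))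
    (x y u : A) (hu : u * star u = 1 ∧ star u * u = 1) (s : Bool) (c : List Bool) :
    fac φ (u * x) (u * y) s c = preU u s * fac φ x y s c * postU u (nx s c) := by
  by_cases hc : Odd c.length
  · simp [fac, hc, ev_twist x y u hu]
  · simp only [fac, hc, if_false]
    rw [ev_even φ htr x y u hu s c hc, ev_twist x y u hu, mul_sub, sub_mul]
    congr 1
    rw [nx_eq, if_neg hc]
    cases s <;> simp [preU, postU, hu.1]

theorem chainG_append (φ : A →ₗ[ℂ] ℂ) (x y : A) (s : Bool) (L : List (List Bool)) (d : List Bool) :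
    chainG φ x y s (L ++ [d]) = chainG φ x y s L * fac φ x y (L.foldl nx s) d := by
  induction L generalizing s with
  | nil => simp [chainG]
  | cons c L ih => simp [chainG, ih, mul_assoc]

theorem fac_mem (φ : A →ₗ[ℂ] ℂ) (x y : A) (s : Bool) (c : List Bool) :
    fac φ x y s c ∈ StarAlgebra.adjoin ℂ ({x, y} : Set A) := by
  have hx : x ∈ StarAlgebra.adjoin ℂ ({x, y} : Set A) :=
    StarAlgebra.subset_adjoin ℂ _ (by simp)
  have hy : y ∈ StarAlgebra.adjoin ℂ ({x, y} : Set A) :=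
    StarAlgebra.subset_adjoin ℂ _ (by simp)
  have hW : ∀ W, evW x y W ∈ StarAlgebra.adjoin ℂ ({x, y} : Set A) := by
    intro W
    refine list_prod_mem ?_
    intro a ha
    obtain ⟨⟨b, t⟩, _, rfl⟩ := List.mem_map.1 ha
    cases b <;> cases t <;> simp [ltr, hx, hy, star_mem]
  unfold fac
  split_ifs
  · exact hW _
  · exact sub_mem (hW _) (SMulMemClass.smul_mem _ (one_mem _))

theorem chainG_mem (φ : A →ₗ[ℂ] ℂ) (x y : A) (s : Bool) (L : List (List Bool)) :
    chainG φ x y s L ∈ StarAlgebra.adjoin ℂ ({x, y} : Set A) := by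
  induction L generalizing s with
  | nil => exact one_mem _
  | cons c L ih => exact mul_mem (fac_mem φ x y s c) (ih _)

theorem run_zero (φ : A →ₗ[ℂ] ℂ) (hφ1 : φ 1 = 1) (htr : ∀ a b : A, φ (a * b) = φ (b * a))
    (x y u : A) (hu : u * star u = 1 ∧ star u * u = 1)
    (hfree : FreeFamily (fun z => φ z) (fun b : Bool => if b then {u} else {x, y}))
    (h36 : Cond36L φ x y) (L : List (List Bool)) :
    ∀ (l : List (Bool × A)) (s : Bool) (L0 : List (List Bool)), L0 ≠ [] →
      (∀ c ∈ L0 ++ L, c ≠ []) → (L0 ++ L).flatten.Pairwise (· ≤ ·) →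
      l.IsChain (fun p q => p.1 ≠ q.1) → (∀ p ∈ l.head?, p.1 = true) →
      (∀ p ∈ l, p.2 ∈ StarAlgebra.adjoin ℂ (if p.1 then ({u} : Set A) else {x, y}) ∧ φ p.2 = 0) →
      φ ((l.reverse.map Prod.snd).prod * chainG φ x y s L0 *
        (postU u (L0.foldl nx s) * chainG φ (u * x) (u * y) (L0.foldl nx s) L)) = 0 := by
  have hum : u ∈ StarAlgebra.adjoin ℂ ({u} : Set A) := StarAlgebra.subset_adjoin ℂ _ (by simp)
  -- freeness applied to a reversed list
  have hfr : ∀ l : List (Bool × A), l ≠ [] → l.IsChain (fun p q => p.1 ≠ q.1) →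
      (∀ p ∈ l, p.2 ∈ StarAlgebra.adjoin ℂ (if p.1 then ({u} : Set A) else {x, y}) ∧ φ p.2 = 0) →
      φ ((l.reverse.map Prod.snd).prod) = 0 := by
    intro l h1 h2 h3
    refine free_list φ _ hfree l.reverse (by simpa using h1) ?_ ?_
    · rw [List.isChain_reverse]
      exact h2.imp fun _ _ h => h.symm
    · intro p hp
      exact h3 p (by simpa using hp)
  have hcons : ∀ (l : List (Bool × A)) (s : Bool) (L0 : List (List Bool)), L0 ≠ [] →
      (∀ c ∈ L0, c ≠ []) → L0.flatten.Pairwise (· ≤ ·) →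
      l.IsChain (fun p q => p.1 ≠ q.1) → (∀ p ∈ l.head?, p.1 = true) →
      (∀ p ∈ l, p.2 ∈ StarAlgebra.adjoin ℂ (if p.1 then ({u} : Set A) else {x, y}) ∧ φ p.2 = 0) →
      ((false, chainG φ x y s L0) :: l).IsChain (fun p q => p.1 ≠ q.1) ∧
      (∀ p ∈ (false, chainG φ x y s L0) :: l,
        p.2 ∈ StarAlgebra.adjoin ℂ (if p.1 then ({u} : Set A) else {x, y}) ∧ φ p.2 = 0) := by
    intro l s L0 h1 h2 h3 h4 h5 h6
    refine ⟨List.isChain_cons.2 ⟨fun p hp => by simp [h5 p hp], h4⟩, ?_⟩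
    intro p hp
    rcases List.mem_cons.1 hp with rfl | hp
    · exact ⟨by simpa using chainG_mem φ x y s L0, h36 s L0 h1 h2 h3⟩
    · exact h6 p hp
  have hcons2 : ∀ (l : List (Bool × A)) (s : Bool) (L0 : List (List Bool)) (w : A),
      w ∈ StarAlgebra.adjoin ℂ ({u} : Set A) → L0 ≠ [] →
      (∀ c ∈ L0, c ≠ []) → L0.flatten.Pairwise (· ≤ ·) →
      l.IsChain (fun p q => p.1 ≠ q.1) → (∀ p ∈ l.head?, p.1 = true) →
      (∀ p ∈ l, p.2 ∈ StarAlgebra.adjoin ℂ (if p.1 then ({u} : Set A) else {x, y}) ∧ φ p.2 = 0) →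
      ((true, w - φ w • (1 : A)) :: (false, chainG φ x y s L0) :: l).IsChain
        (fun p q => p.1 ≠ q.1) ∧
      (∀ p ∈ (true, w - φ w • (1 : A)) :: (false, chainG φ x y s L0) :: l,
        p.2 ∈ StarAlgebra.adjoin ℂ (if p.1 then ({u} : Set A) else {x, y}) ∧ φ p.2 = 0) := by
    intro l s L0 w hw h1 h2 h3 h4 h5 h6
    obtain ⟨a1, a2⟩ := hcons l s L0 h1 h2 h3 h4 h5 h6
    refine ⟨List.isChain_cons.2 ⟨fun p hp => by simp at hp; simp [← hp], a1⟩, ?_⟩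
    intro p hp
    rcases List.mem_cons.1 hp with rfl | hp
    · refine ⟨?_, by simp [hφ1]⟩
      simpa using sub_mem hw (SMulMemClass.smul_mem (φ w) (one_mem (StarAlgebra.adjoin ℂ {u})))
    · exact a2 p hp
  induction L with
  | nil =>
    intro l s L0 h1 h2 h3 h4 h5 h6
    simp only [List.append_nil] at h2 h3
    obtain ⟨a1, a2⟩ := hcons l s L0 h1 h2 h3 h4 h5 h6
    have e1 := hfr _ (by simp) a1 a2
    obtain ⟨b1, b2⟩ := hcons2 l s L0 (star u) (star_mem hum) h1 h2 h3 h4 h5 h6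
    have e2 := hfr _ (by simp) b1 b2
    simp only [List.reverse_cons, List.map_append, List.prod_append, List.map_cons, List.map_nil,
      List.prod_cons, List.prod_nil, mul_one] at e1 e2
    rw [mul_sub, map_sub, mul_smul_comm, map_smul, mul_one, e1, smul_zero, sub_zero] at e2
    cases hb : L0.foldl nx s
    · simpa [postU, chainG] using e1
    · simpa [postU, chainG] using e2
  | cons d L IH =>
    intro l s L0 h1 h2 h3 h4 h5 h6
    set t := L0.foldl nx s with ht
    have hw : ∃ w ∈ StarAlgebra.adjoin ℂ ({u} : Set A), postU u t * preU u t = w :=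
      ⟨_, by cases t <;> simp [postU, preU, hum, star_mem], rfl⟩
    obtain ⟨w, hw, hwt⟩ := hw
    have hsub : L0.flatten.Pairwise (· ≤ ·) := by
      refine h3.sublist ?_
      simp
    obtain ⟨b1, b2⟩ := hcons2 l s L0 w hw h1
      (fun c hc => h2 c (List.mem_append_left _ hc)) hsub h4 h5 h6
    have e1 := IH _ t [d] (by simp) (fun c hc => h2 c (List.mem_append_right _ (by simpa using hc)))
      (by refine h3.sublist ?_; simp) b1 (by simp) b2
    have e2 := IH l s (L0 ++ [d]) (by simp) (fun c hc => h2 c (by simpa using hc))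
      (by simpa using h3) h4 h5 h6
    simp only [chainG_append, List.foldl_append, List.foldl_cons, List.foldl_nil, ← ht] at e2
    simp only [List.reverse_cons, List.map_append, List.prod_append, List.map_cons, List.map_nil,
      List.prod_cons, List.prod_nil, mul_one, chainG, List.foldl_cons, List.foldl_nil] at e1
    simp only [chainG]
    rw [fac_twist φ htr x y u hu]
    simp only [mul_sub, sub_mul, map_sub, mul_smul_comm, smul_mul_assoc, map_smul, mul_one,
      mul_assoc] at e1 e2 ⊢
    rw [e2, smul_zero, sub_zero, ← hwt] at e1
    simpa only [mul_assoc] using e1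

theorem cond36L_twist (φ : A →ₗ[ℂ] ℂ) (hφ1 : φ 1 = 1) (htr : ∀ a b : A, φ (a * b) = φ (b * a))
    (x y u : A) (hu : u * star u = 1 ∧ star u * u = 1)
    (hfree : FreeFamily (fun z => φ z) (fun b : Bool => if b then {u} else {x, y}))
    (h36 : Cond36L φ x y) : Cond36L φ (u * x) (u * y) := by
  have hum : u ∈ StarAlgebra.adjoin ℂ ({u} : Set A) := StarAlgebra.subset_adjoin ℂ _ (by simp)
  intro s L hL hne hs
  cases L with
  | nil => exact absurd rfl hL
  | cons c L =>
    have R := run_zero φ hφ1 htr x y u hu hfree h36 L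
    have e1 := R [] s [c] (by simp) (by simpa using hne) (by simpa using hs) (by simp) (by simp)
      (by simp)
    have e2 := R [(true, u - φ u • (1 : A))] s [c] (by simp) (by simpa using hne)
      (by simpa using hs) (by simp) (by simp) (by
        intro p hp
        rw [List.mem_singleton] at hp
        subst hp
        refine ⟨?_, by simp [hφ1]⟩
        simpa using sub_mem hum (SMulMemClass.smul_mem (φ u) (one_mem (StarAlgebra.adjoin ℂ {u}))))
    simp only [List.reverse_nil, List.map_nil, List.prod_nil, one_mul, chainG, mul_one,
      List.foldl_cons, List.foldl_nil] at e1
    simp only [List.reverse_singleton, List.map_cons, List.map_nil, List.prod_cons, List.prod_nil,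
      chainG, mul_one, List.foldl_cons, List.foldl_nil, sub_mul, map_sub, smul_mul_assoc,
      one_mul, map_smul, e1, smul_zero, sub_zero] at e2
    simp only [chainG]
    rw [fac_twist φ htr x y u hu]
    cases s
    · simpa [preU, mul_assoc] using e2
    · simpa [preU, mul_assoc] using e1

theorem altProd_evW (x y : A) (n k : ℕ) (ω : Fin n → Bool) :
    altProd x y n k ω = evW x y (List.ofFn fun t : Fin n => (decide (k ≤ t.val), ω t)) := by
  rw [altProd, evW, List.map_ofFn]
  congr 2
  funext t
  by_cases h : t.val < k
  · simp [ltr, h]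
  · simp [ltr, h, not_lt.1 h]

end Helpers

/-- In a unital C*-algebra with a faithful tracial state, let `u` be any unitary `*`-free
from `{x, y}`, and suppose there is a Haar unitary `v` with `{v}`, `{u}`, `{x, y}`
`*`-free. If `(x, y)` satisfies condition (3.6), then `(x, y)` and `(ux, uy)` have the
same bi-`*`-distribution. -/
theorem sameBiDist_of_condition36_unitary
    {A : Type*} [NormedRing A] [StarRing A] [CStarRing A] [NormedAlgebra ℂ A]
    [CompleteSpace A] [StarModule ℂ A]
    (φ : A →ₗ[ℂ] ℂ) (hφ1 : φ 1 = 1) (hφs : ∀ a : A, φ (star a) = starRingEnd ℂ (φ a))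
    (hpos : ∀ a : A, 0 ≤ (φ (star a * a)).re ∧ (φ (star a * a)).im = 0)
    (hfaith : ∀ a : A, φ (star a * a) = 0 → a = 0)
    (htr : ∀ a b : A, φ (a * b) = φ (b * a))
    (x y u : A) (hu : u * star u = 1 ∧ star u * u = 1)
    (hfree : FreeFamily (fun z => φ z) (fun b : Bool => if b then {u} else {x, y}))
    (hv : ∃ v : A, IsHaarUnitary (fun z => φ z) v ∧
      FreeFamily (fun z => φ z)
        (fun i : Fin 3 => if i = 0 then {v} else if i = 1 then {u} else {x, y}))
    (h36 : Condition36 (fun z => φ z) x y) :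
    SameBiDist (fun z => φ z) x y (u * x) (u * y) := by
  have h1 := cond36L_of φ x y h36
  have h2 := cond36L_twist φ hφ1 htr x y u hu hfree h1
  intro n _ k _ ω
  show φ _ = φ _
  rw [altProd_evW, altProd_evW]
  refine agree_all φ x y (u * x) (u * y) (ev_even φ htr x y u hu) h1 h2 _ _ rfl ?_
  rw [List.map_ofFn, List.pairwise_ofFn]
  intro i j hij
  simp only [Function.comp_apply, Bool.le_iff_imp, decide_eq_true_eq]
  intro hk
  exact hk.trans (le_of_lt hij)
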